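/- Let i denote the imaginary unit and let A = [[1,1],[−1/2,1/2]], B = [[0,1],[−1,0]], C = [[1/2,−i/2],[−i,1]], D = [[i,1],[−1/2,−i/2]]. Then for the 4-arity CNOT1 gate G = |0000⟩ + |0110⟩ + |1011⟩ + |1101⟩, one has (A⊗B⊗C⊗D)G = |0000⟩ + (i/2)|1100⟩ − i|1010⟩ − (i/4)|1001⟩ − 2|0110⟩ + (1/2)|0101⟩ − |0011⟩ + (i/2)|1111⟩. Consequently CNOT1 is Pfaffian under the heterogeneous change of basis (A, B, C, D), the right-hand side being sPf(Ξ) for the skew-symmetric matrix Ξ with upper-triangular entries Ξ₁₂ = i/2, Ξ₁₃ = −i, Ξ₁₄ = −i/4, Ξ₂₃ = −2, Ξ₂₄ = 1/2, Ξ₃₄ = −1. -/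

import Mathlib

/-!
CNOT1 is `∑_{p,q} |p, q, p ⊕ q, p⟩`. As `B` has a single nonzero entry in each row, the sum over `q`
collapses, and only the terms `p = 0` and `p = 1` contribute to the coordinate at `b`. In each of
`A`, `C`, `D` the two columns agree up to signs and powers of `i`, and these factors multiply to
`(-1)^|b|`: the two terms cancel at odd `b` and coincide at even `b`. A sub-Pfaffian vector vanishes
at odd bitstrings as well, so everything is decided by the eight even coordinates. The only one that
does not simply read off an entry of `Ξ` is at `1111`, where the Laplace expansion gives
`(i/2)(-1) - (-i)(1/2) + (-i/4)(-2) = i/2`.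
-/

open scoped BigOperators

noncomputable section

/-- Change of basis on an `n`-arity gate: `((A₁⊗…⊗Aₙ)G)(b) = Σ_c (∏ᵢ Aᵢ(bᵢ,cᵢ))·G(c)`. -/
def cobGate {n : ℕ} (A : Fin n → Matrix (Fin 2) (Fin 2) ℂ) (G : (Fin n → Fin 2) → ℂ) :
    (Fin n → Fin 2) → ℂ :=
  fun b => ∑ c : Fin n → Fin 2, (∏ i, A i (b i) (c i)) * G c

/-- Change of basis on an `n`-arity cogate: `C′(b) = Σ_c C(c)·∏ᵢ Aᵢ⁻¹(cᵢ,bᵢ)`. -/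
def cobCogate {n : ℕ} (A : Fin n → Matrix (Fin 2) (Fin 2) ℂ) (C : (Fin n → Fin 2) → ℂ) :
    (Fin n → Fin 2) → ℂ :=
  fun b => ∑ c : Fin n → Fin 2, C c * ∏ i, (A i)⁻¹ (c i) (b i)

/-- The standard basis vector (ket/bra) at the bitstring `v`. -/
def ket {n : ℕ} (v : Fin n → Fin 2) : (Fin n → Fin 2) → ℂ :=
  fun b => if b = v then 1 else 0

/-- The support of a bitstring. -/
def supp {n : ℕ} (b : Fin n → Fin 2) : Finset (Fin n) :=
  Finset.univ.filter fun i => b i = 1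

/-- Fuel-driven Laplace expansion of the Pfaffian of a principal submatrix. -/
def subPfAux {n : ℕ} (Ξ : Matrix (Fin n) (Fin n) ℂ) : ℕ → Finset (Fin n) → ℂ
  | 0, I => if I = ∅ then 1 else 0
  | fuel + 1, I =>
    if hI : I.Nonempty then
      if Odd I.card then 0
      else
        ∑ i ∈ I.erase (I.min' hI),
          (-1 : ℂ) ^ (I.filter fun j => j ≤ i).card * Ξ (I.min' hI) i *
            subPfAux Ξ fuel ((I.erase (I.min' hI)).erase i)
    else 1

/-- `subPf Ξ I` is the Pfaffian `Pf(Ξ|_I)` of the principal submatrix of `Ξ` on the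
rows and columns in `I` (`1` on the empty set, `0` for odd `|I|`). -/
def subPf {n : ℕ} (Ξ : Matrix (Fin n) (Fin n) ℂ) (I : Finset (Fin n)) : ℂ :=
  subPfAux Ξ I.card I

/-- The sub-Pfaffian vector: coordinate `Pf(Ξ|_I)` at the bitstring with support `I`. -/
def sPf {n : ℕ} (Ξ : Matrix (Fin n) (Fin n) ℂ) : (Fin n → Fin 2) → ℂ :=
  fun b => subPf Ξ (supp b)

/-- The dual sub-Pfaffian vector: coordinate `Pf(Θ|_{Jᶜ})` at the bitstring with support `J`. -/
def sPfStar {n : ℕ} (Θ : Matrix (Fin n) (Fin n) ℂ) : (Fin n → Fin 2) → ℂ :=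
  fun b => subPf Θ (supp b)ᶜ

/-- A matrix is skew-symmetric. -/
def IsSkew {n : ℕ} (Ξ : Matrix (Fin n) (Fin n) ℂ) : Prop :=
  ∀ i j, Ξ j i = -Ξ i j

/-- A gate is Pfaffian under the change of basis `M`. -/
def IsPfaffGate {n : ℕ} (M : Fin n → Matrix (Fin 2) (Fin 2) ℂ) (G : (Fin n → Fin 2) → ℂ) : Prop :=
  ∃ (α : ℂ) (Ξ : Matrix (Fin n) (Fin n) ℂ), IsSkew Ξ ∧ cobGate M G = fun b => α * sPf Ξ b

/-- A cogate is Pfaffian under the change of basis `M`. -/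
def IsPfaffCogate {n : ℕ} (M : Fin n → Matrix (Fin 2) (Fin 2) ℂ) (C : (Fin n → Fin 2) → ℂ) : Prop :=
  ∃ (β : ℂ) (Θ : Matrix (Fin n) (Fin n) ℂ), IsSkew Θ ∧ cobCogate M C = fun b => β * sPfStar Θ b

/-- The 4-arity CNOT1 gate. -/
def cnot1 : (Fin 4 → Fin 2) → ℂ :=
  ket ![0, 0, 0, 0] + ket ![0, 1, 1, 0] + ket ![1, 0, 1, 1] + ket ![1, 1, 0, 1]

def mA : Matrix (Fin 2) (Fin 2) ℂ := !![1, 1; -(1/2), 1/2]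
def mB : Matrix (Fin 2) (Fin 2) ℂ := !![0, 1; -1, 0]
def mC : Matrix (Fin 2) (Fin 2) ℂ := !![1/2, -Complex.I/2; -Complex.I, 1]
def mD : Matrix (Fin 2) (Fin 2) ℂ := !![Complex.I, 1; -(1/2), -Complex.I/2]

def xiCnot : Matrix (Fin 4) (Fin 4) ℂ :=
  !![0, Complex.I/2, -Complex.I, -Complex.I/4;
     -(Complex.I/2), 0, -2, 1/2;
     Complex.I, 2, 0, -1;
     Complex.I/4, -(1/2), 1, 0]

section EvenGate

variable {n : ℕ}

/-- The parity condition on a gate: its coordinates at bitstrings of odd Hamming weight vanish. It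
reduces identities between such gates to the bitstrings of even weight. -/
def IsEvenGate (G : (Fin n → Fin 2) → ℂ) : Prop :=
  ∀ b, Odd (supp b).card → G b = 0

lemma card_supp (b : Fin n → Fin 2) : (supp b).card = ∑ i, (b i : ℕ) := by
  rw [supp, Finset.card_filter]
  refine Finset.sum_congr rfl fun i _ => ?_
  obtain h | h := Fin.exists_fin_two.mp ⟨b i, rfl⟩ <;> simp [h]

lemma IsEvenGate.eq_sum_ket {G : (Fin n → Fin 2) → ℂ} (hG : IsEvenGate G) :
    G = ∑ v with Even (supp v).card, G v • ket v := by
  funext b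
  by_cases hb : Even (supp b).card
  · simp [ket, hb]
  · simp [ket, hb, hG b (Nat.not_even_iff_odd.mp hb)]

lemma IsEvenGate.apply_four {G : (Fin 4 → Fin 2) → ℂ} (hG : IsEvenGate G) (b : Fin 4 → Fin 2) :
    G b = G ![0,0,0,0] * ket ![0,0,0,0] b + G ![1,1,0,0] * ket ![1,1,0,0] b
      + G ![1,0,1,0] * ket ![1,0,1,0] b + G ![1,0,0,1] * ket ![1,0,0,1] b
      + G ![0,1,1,0] * ket ![0,1,1,0] b + G ![0,1,0,1] * ket ![0,1,0,1] b
      + G ![0,0,1,1] * ket ![0,0,1,1] b + G ![1,1,1,1] * ket ![1,1,1,1] b := by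
  have even_words : ({v : Fin 4 → Fin 2 | Even (supp v).card} : Finset _) =
      {![0,0,0,0], ![1,1,0,0], ![1,0,1,0], ![1,0,0,1], ![0,1,1,0], ![0,1,0,1], ![0,0,1,1],
        ![1,1,1,1]} := by decide
  conv_lhs => rw [hG.eq_sum_ket, even_words]
  simp [add_assoc]

end EvenGate

section Pfaffian

variable {n : ℕ} (Ξ : Matrix (Fin n) (Fin n) ℂ)

lemma subPf_empty : subPf Ξ ∅ = 1 := by
  simp [subPf, subPfAux]

lemma subPf_of_odd {I : Finset (Fin n)} (hI : Odd I.card) : subPf Ξ I = 0 := by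
  obtain ⟨k, hk⟩ := Nat.exists_eq_succ_of_ne_zero hI.pos.ne'
  rw [subPf, hk, subPfAux, dif_pos (Finset.card_pos.mp hI.pos), if_pos hI]

lemma isEvenGate_sPf : IsEvenGate (sPf Ξ) :=
  fun _ hb => subPf_of_odd Ξ hb

lemma subPfAux_eq_subPf {fuel : ℕ} {I : Finset (Fin n)} (hI : I.card ≤ fuel) :
    subPfAux Ξ fuel I = subPf Ξ I := by
  suffices ∀ k l (J : Finset (Fin n)), J.card ≤ k → J.card ≤ l →
      subPfAux Ξ k J = subPfAux Ξ l J from this _ _ I hI le_rfl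
  intro k
  induction k with
  | zero =>
    intro l J hk _
    obtain rfl : J = ∅ := Finset.card_eq_zero.mp (Nat.le_zero.mp hk)
    cases l <;> simp [subPfAux]
  | succ k ih =>
    rintro (_ | l) J hk hl
    · obtain rfl : J = ∅ := Finset.card_eq_zero.mp (Nat.le_zero.mp hl)
      simp [subPfAux]
    · simp only [subPfAux]
      split_ifs with hJ
      · rfl
      · refine Finset.sum_congr rfl fun i hi => ?_
        have hcard := Finset.card_erase_of_mem hi
        have hcard' := Finset.card_erase_of_mem (J.min'_mem hJ)
        rw [ih l _ (by omega) (by omega)]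
      · rfl

lemma subPf_insert_eq_sum {m : Fin n} {J : Finset (Fin n)} (hm : ∀ j ∈ J, m < j) :
    subPf Ξ (insert m J) =
      ∑ j ∈ J, (-1) ^ (J.filter (· < j)).card * Ξ m j * subPf Ξ (J.erase j) := by
  have hmJ : m ∉ J := fun h => (hm m h).false
  have hcard : (insert m J).card = J.card + 1 := Finset.card_insert_of_notMem hmJ
  rcases Nat.even_or_odd J.card with hJ | hJ
  · rw [subPf_of_odd Ξ (hcard ▸ hJ.add_one), Finset.sum_eq_zero]
    intro j hj
    have hodd : Odd (J.erase j).card := by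
      rw [← Finset.card_erase_add_one hj] at hJ
      exact Nat.not_even_iff_odd.mp (Nat.even_add_one.mp hJ)
    rw [subPf_of_odd Ξ hodd, mul_zero]
  · have hne : (insert m J).Nonempty := Finset.insert_nonempty m J
    have hmin : (insert m J).min' hne = m :=
      (Finset.min'_eq_iff _ _ _).mpr ⟨Finset.mem_insert_self m J, by
        simpa using fun j hj => (hm j hj).le⟩
    have hodd : ¬ Odd (insert m J).card := by
      rw [hcard]; exact Nat.not_odd_iff_even.mpr hJ.add_one
    rw [subPf, hcard, subPfAux, dif_pos hne, if_neg hodd, hmin, Finset.erase_insert hmJ]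
    refine Finset.sum_congr rfl fun j hj => ?_
    have hfilter : (insert m J).filter (· ≤ j) = insert m (insert j (J.filter (· < j))) := by
      grind
    have hsign : ((insert m J).filter (· ≤ j)).card = (J.filter (· < j)).card + 2 := by
      rw [hfilter, Finset.card_insert_of_notMem (by grind), Finset.card_insert_of_notMem (by simp)]
    rw [hsign, pow_add, neg_one_sq, mul_one, subPfAux_eq_subPf Ξ (Finset.card_erase_le)]

lemma subPf_pair {i j : Fin n} (hij : i < j) : subPf Ξ {i, j} = Ξ i j := by
  have filter_lt : ({j} : Finset (Fin n)).filter (· < j) = ∅ := by grind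
  rw [subPf_insert_eq_sum Ξ (by simpa), Finset.sum_singleton, filter_lt, Finset.card_empty,
    pow_zero, one_mul, Finset.erase_singleton, subPf_empty, mul_one]

lemma subPf_quadruple {i j k l : Fin n} (hij : i < j) (hjk : j < k) (hkl : k < l) :
    subPf Ξ {i, j, k, l} = Ξ i j * Ξ k l - Ξ i k * Ξ j l + Ξ i l * Ξ j k := by
  have erase_j : ({j, k, l} : Finset (Fin n)).erase j = {k, l} := by grind
  have erase_k : ({j, k, l} : Finset (Fin n)).erase k = {j, l} := by grind
  have erase_l : ({j, k, l} : Finset (Fin n)).erase l = {j, k} := by grind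
  have below_j : ({j, k, l} : Finset (Fin n)).filter (· < j) = ∅ := by grind
  have below_k : ({j, k, l} : Finset (Fin n)).filter (· < k) = {j} := by grind
  have below_l : ({j, k, l} : Finset (Fin n)).filter (· < l) = {j, k} := by grind
  rw [subPf_insert_eq_sum Ξ (by grind), Finset.sum_insert (by grind), Finset.sum_pair hkl.ne,
    erase_j, erase_k, erase_l, below_j, below_k, below_l, subPf_pair Ξ hkl,
    subPf_pair Ξ (hjk.trans hkl), subPf_pair Ξ hjk, Finset.card_empty, Finset.card_singleton,
    Finset.card_pair hjk.ne]
  ring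

lemma sPf_four (Ξ : Matrix (Fin 4) (Fin 4) ℂ) (b : Fin 4 → Fin 2) :
    sPf Ξ b = ket ![0,0,0,0] b + Ξ 0 1 * ket ![1,1,0,0] b + Ξ 0 2 * ket ![1,0,1,0] b
      + Ξ 0 3 * ket ![1,0,0,1] b + Ξ 1 2 * ket ![0,1,1,0] b + Ξ 1 3 * ket ![0,1,0,1] b
      + Ξ 2 3 * ket ![0,0,1,1] b
      + (Ξ 0 1 * Ξ 2 3 - Ξ 0 2 * Ξ 1 3 + Ξ 0 3 * Ξ 1 2) * ket ![1,1,1,1] b := by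
  have supp_0000 : supp ![0,0,0,0] = (∅ : Finset (Fin 4)) := by decide
  have supp_1100 : supp ![1,1,0,0] = ({0, 1} : Finset (Fin 4)) := by decide
  have supp_1010 : supp ![1,0,1,0] = ({0, 2} : Finset (Fin 4)) := by decide
  have supp_1001 : supp ![1,0,0,1] = ({0, 3} : Finset (Fin 4)) := by decide
  have supp_0110 : supp ![0,1,1,0] = ({1, 2} : Finset (Fin 4)) := by decide
  have supp_0101 : supp ![0,1,0,1] = ({1, 3} : Finset (Fin 4)) := by decide
  have supp_0011 : supp ![0,0,1,1] = ({2, 3} : Finset (Fin 4)) := by decide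
  have supp_1111 : supp ![1,1,1,1] = ({0, 1, 2, 3} : Finset (Fin 4)) := by decide
  rw [(isEvenGate_sPf Ξ).apply_four b]
  simp only [sPf, supp_0000, supp_1100, supp_1010, supp_1001, supp_0110, supp_0101, supp_0011,
    supp_1111, subPf_empty, one_mul]
  repeat rw [subPf_pair Ξ (by decide)]
  rw [subPf_quadruple Ξ (by decide) (by decide) (by decide)]

end Pfaffian

section ChangeOfBasis

lemma cobGate_ket {n : ℕ} (M : Fin n → Matrix (Fin 2) (Fin 2) ℂ) (v b : Fin n → Fin 2) :
    cobGate M (ket v) b = ∏ i, M i (b i) (v i) := by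
  simp [cobGate, ket]

lemma cobGate_sum {n : ℕ} {ι : Type*} (M : Fin n → Matrix (Fin 2) (Fin 2) ℂ) (s : Finset ι)
    (G : ι → (Fin n → Fin 2) → ℂ) :
    cobGate M (∑ k ∈ s, G k) = ∑ k ∈ s, cobGate M (G k) := by
  funext b
  simp only [cobGate, Finset.sum_apply, Finset.mul_sum]
  exact Finset.sum_comm

lemma cnot1_eq_sum_ket : cnot1 = ∑ p, ∑ q, ket ![p, q, p + q, p] := by
  simp [cnot1, Fin.sum_univ_two, add_assoc]

lemma cobGate_cnot1 (M : Fin 4 → Matrix (Fin 2) (Fin 2) ℂ) (b : Fin 4 → Fin 2) :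
    cobGate M cnot1 b =
      ∑ p, ∑ q, M 0 (b 0) p * M 1 (b 1) q * M 2 (b 2) (p + q) * M 3 (b 3) p := by
  simp only [cnot1_eq_sum_ket, cobGate_sum, Finset.sum_apply, cobGate_ket, Fin.prod_univ_four,
    Matrix.cons_val]

lemma mA_one (x : Fin 2) : mA x 1 = (-1) ^ (x : ℕ) * mA x 0 := by
  fin_cases x <;> simp [mA]

lemma mB_apply (x y : Fin 2) : mB x y = if y = x + 1 then (-1) ^ (x : ℕ) else 0 := by
  fin_cases x <;> fin_cases y <;> simp [mB]

lemma mC_eq_mul_mC_add_one (x y : Fin 2) :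
    mC x y = Complex.I * (-1) ^ (x + y : ℕ) * mC x (y + 1) := by
  fin_cases x <;> fin_cases y <;> simp [mC, div_eq_mul_inv, ← mul_assoc]

lemma mD_one (x : Fin 2) : mD x 1 = -Complex.I * (-1) ^ (x : ℕ) * mD x 0 := by
  fin_cases x <;> simp [mD, div_eq_mul_inv]

lemma cobGate_cnot1_eq_one_add_sign_mul (b : Fin 4 → Fin 2) :
    cobGate ![mA, mB, mC, mD] cnot1 b =
      (1 + (-1) ^ (supp b).card) *
        ((-1) ^ (b 1 : ℕ) * mA (b 0) 0 * mC (b 2) (b 1 + 1) * mD (b 3) 0) := by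
  have collapse : cobGate ![mA, mB, mC, mD] cnot1 b =
      ∑ p, mA (b 0) p * (-1) ^ (b 1 : ℕ) * mC (b 2) (p + (b 1 + 1)) * mD (b 3) p := by
    rw [cobGate_cnot1]
    refine Finset.sum_congr rfl fun p _ => ?_
    simp only [Matrix.cons_val, mB_apply, mul_ite, ite_mul, mul_zero, zero_mul, Finset.sum_ite_eq',
      Finset.mem_univ, if_true]
  have flip (y : Fin 2) : 1 + (y + 1) = y := by revert y; decide
  have sign : (-1 : ℂ) ^ (supp b).card =
      (-1) ^ (b 0 : ℕ) * (-1) ^ (b 1 : ℕ) * (-1) ^ (b 2 : ℕ) * (-1) ^ (b 3 : ℕ) := by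
    rw [card_supp, Fin.sum_univ_four, pow_add, pow_add, pow_add]
  rw [collapse, Fin.sum_univ_two, zero_add, flip, sign, mA_one, mC_eq_mul_mC_add_one (b 2) (b 1),
    mD_one, pow_add]
  linear_combination
    (-(-1) ^ (b 0 + 2 * b 1 + b 2 + b 3 : ℕ) * mA (b 0) 0 * mC (b 2) (b 1 + 1) * mD (b 3) 0) *
      Complex.I_mul_I

lemma isEvenGate_cobGate_cnot1 : IsEvenGate (cobGate ![mA, mB, mC, mD] cnot1) := fun b hb => by
  rw [cobGate_cnot1_eq_one_add_sign_mul, hb.neg_one_pow, add_neg_cancel, zero_mul]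

lemma cobGate_cnot1_of_even {b : Fin 4 → Fin 2} (hb : Even (supp b).card) :
    cobGate ![mA, mB, mC, mD] cnot1 b =
      2 * ((-1) ^ (b 1 : ℕ) * mA (b 0) 0 * mC (b 2) (b 1 + 1) * mD (b 3) 0) := by
  rw [cobGate_cnot1_eq_one_add_sign_mul, hb.neg_one_pow, one_add_one_eq_two]

lemma cobGate_cnot1_at_0000 : cobGate ![mA, mB, mC, mD] cnot1 ![0,0,0,0] = 1 :=
  calc
    _ = 2 * ((-1) ^ 0 * 1 * (-Complex.I/2) * Complex.I) := by
      rw [cobGate_cnot1_of_even (by decide)]; simp [mA, mC, mD]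
    _ = 1 := by linear_combination -Complex.I_mul_I

lemma cobGate_cnot1_at_1111 : cobGate ![mA, mB, mC, mD] cnot1 ![1,1,1,1] = Complex.I/2 :=
  calc
    _ = 2 * ((-1) ^ 1 * -(1/2) * -Complex.I * -(1/2)) := by
      rw [cobGate_cnot1_of_even (by decide)]; simp [mA, mC, mD]
    _ = Complex.I/2 := by ring

lemma pfaffian_xiCnot :
    xiCnot 0 1 * xiCnot 2 3 - xiCnot 0 2 * xiCnot 1 3 + xiCnot 0 3 * xiCnot 1 2 = Complex.I/2 := by
  simp only [xiCnot, Matrix.of_apply, Matrix.cons_val]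
  ring

lemma cobGate_cnot1_eq_sPf : cobGate ![mA, mB, mC, mD] cnot1 = sPf xiCnot := by
  have at_1100 : cobGate ![mA, mB, mC, mD] cnot1 ![1,1,0,0] = xiCnot 0 1 :=
    calc
      _ = 2 * ((-1) ^ 1 * -(1/2) * (1/2) * Complex.I) := by
        rw [cobGate_cnot1_of_even (by decide)]; simp [mA, mC, mD]
      _ = Complex.I/2 := by ring
  have at_1010 : cobGate ![mA, mB, mC, mD] cnot1 ![1,0,1,0] = xiCnot 0 2 :=
    calc
      _ = 2 * ((-1) ^ 0 * -(1/2) * 1 * Complex.I) := by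
        rw [cobGate_cnot1_of_even (by decide)]; simp [mA, mC, mD]
      _ = -Complex.I := by ring
  have at_1001 : cobGate ![mA, mB, mC, mD] cnot1 ![1,0,0,1] = xiCnot 0 3 :=
    calc
      _ = 2 * ((-1) ^ 0 * -(1/2) * (-Complex.I/2) * -(1/2)) := by
        rw [cobGate_cnot1_of_even (by decide)]; simp [mA, mC, mD]
      _ = -Complex.I/4 := by ring
  have at_0110 : cobGate ![mA, mB, mC, mD] cnot1 ![0,1,1,0] = xiCnot 1 2 :=
    calc
      _ = 2 * ((-1) ^ 1 * 1 * -Complex.I * Complex.I) := by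
        rw [cobGate_cnot1_of_even (by decide)]; simp [mA, mC, mD]
      _ = -2 := by linear_combination 2 * Complex.I_mul_I
  have at_0101 : cobGate ![mA, mB, mC, mD] cnot1 ![0,1,0,1] = xiCnot 1 3 :=
    calc
      _ = 2 * ((-1) ^ 1 * 1 * (1/2 : ℂ) * -(1/2)) := by
        rw [cobGate_cnot1_of_even (by decide)]; simp [mA, mC, mD]
      _ = 1/2 := by ring
  have at_0011 : cobGate ![mA, mB, mC, mD] cnot1 ![0,0,1,1] = xiCnot 2 3 :=
    calc
      _ = 2 * ((-1) ^ 0 * 1 * 1 * -(1/2 : ℂ)) := by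
        rw [cobGate_cnot1_of_even (by decide)]; simp [mA, mC, mD]
      _ = -1 := by ring
  funext b
  rw [isEvenGate_cobGate_cnot1.apply_four b, sPf_four, cobGate_cnot1_at_0000, at_1100, at_1010,
    at_1001, at_0110, at_0101, at_0011, cobGate_cnot1_at_1111, pfaffian_xiCnot, one_mul]

end ChangeOfBasis

/-- Theorem 5.3.2: CNOT1 is Pfaffian under a heterogeneous change of basis. -/
theorem stmt15 :
    (cobGate ![mA, mB, mC, mD] cnot1 =
      fun b => ket ![0,0,0,0] b + (Complex.I/2) * ket ![1,1,0,0] b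
        - Complex.I * ket ![1,0,1,0] b - (Complex.I/4) * ket ![1,0,0,1] b
        - 2 * ket ![0,1,1,0] b + (1/2 : ℂ) * ket ![0,1,0,1] b
        - ket ![0,0,1,1] b + (Complex.I/2) * ket ![1,1,1,1] b) ∧
    cobGate ![mA, mB, mC, mD] cnot1 = fun b => sPf xiCnot b := by
  refine ⟨?_, cobGate_cnot1_eq_sPf⟩
  funext b
  rw [cobGate_cnot1_eq_sPf, sPf_four]
  simp only [xiCnot, Matrix.of_apply, Matrix.cons_val]
  ring
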